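/- Let Δ and k be natural numbers, let G be a simple graph with maximum degree at most Δ, and let X, Y ⊆ V(G). Then either (1) G contains k pairwise non-adjacent X-Y-paths, or (2) there exists a set of fewer than 2^{2Δ(Δ−1)+1}·k vertices of G that separates X and Y. -/

import Mathlib

open SimpleGraph

universe u

variable {V : Type u}

/-- A packaged walk in `G`: a pair of endpoints together with a walk between them. -/
abbrev PathPkg (G : SimpleGraph V) : Type u := Σ x : V, Σ y : V, G.Walk x y

/-- The set of vertices of a packaged walk. -/
def pkgSupport {G : SimpleGraph V} (p : PathPkg G) : Set V := {x | x ∈ p.2.2.support}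

/-- The set of edges of a packaged walk. -/
def pkgEdges {G : SimpleGraph V} (p : PathPkg G) : Set (Sym2 V) := {e | e ∈ p.2.2.edges}

/-- `p` is an `X`-`Y`-path: a path whose first endpoint lies in `X` and whose
second endpoint lies in `Y`. -/
def IsXYPath (G : SimpleGraph V) (X Y : Set V) (p : PathPkg G) : Prop :=
  p.2.2.IsPath ∧ p.1 ∈ X ∧ p.2.1 ∈ Y

/-- Two packaged walks are (vertex-)disjoint. -/
def PkgDisjoint {G : SimpleGraph V} (p q : PathPkg G) : Prop :=
  ∀ x, x ∈ pkgSupport p → x ∉ pkgSupport q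

/-- Two packaged walks are non-adjacent: they are vertex-disjoint and no edge of `G`
joins a vertex of one to a vertex of the other. -/
def PkgNonAdj (G : SimpleGraph V) (p q : PathPkg G) : Prop :=
  ∀ a, a ∈ pkgSupport p → ∀ b, b ∈ pkgSupport q → a ≠ b ∧ ¬ G.Adj a b

/-- `Z` separates `X` and `Y` in `G`: every `X`-`Y`-path meets `Z`. -/
def XYSeparates (G : SimpleGraph V) (X Y Z : Set V) : Prop :=
  ∀ p : PathPkg G, IsXYPath G X Y p → ∃ z, z ∈ Z ∧ z ∈ pkgSupport p

/-- `M` is an induced matching of `G`: a set of edges of `G` such that any two distinct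
edges of `M` are at distance at least `2` in `G` (no endpoint of one equals or is
adjacent to an endpoint of the other). -/
def IsInducedMatching (G : SimpleGraph V) (M : Set (Sym2 V)) : Prop :=
  M ⊆ G.edgeSet ∧
    ∀ e₁, e₁ ∈ M → ∀ e₂, e₂ ∈ M → e₁ ≠ e₂ →
      ∀ a, a ∈ e₁ → ∀ b, b ∈ e₂ → a ≠ b ∧ ¬ G.Adj a b

/-- `G` admits a partition of its edge set into `n` induced matchings
(a strong edge colouring with `n` colours). -/
def HasStrongEdgeColoring (G : SimpleGraph V) (n : ℕ) : Prop :=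
  ∃ M : Fin n → Set (Sym2 V),
    (∀ i, IsInducedMatching G (M i)) ∧
    (Pairwise fun i j => Disjoint (M i) (M j)) ∧
    (⋃ i, M i) = G.edgeSet

/-- The strong chromatic index of `G`: the least number of induced matchings into
which the edge set of `G` can be partitioned. -/
noncomputable def strongChromaticIndex (G : SimpleGraph V) : ℕ :=
  sInf {n | HasStrongEdgeColoring G n}

/-- `G` contains the complete graph `K_r` as a topological minor: there are `r` distinct
branch vertices joined pairwise by internally disjoint paths whose internal vertices
avoid all branch vertices. -/
def HasTopKMinor (G : SimpleGraph V) (r : ℕ) : Prop :=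
  ∃ (f : Fin r → V) (P : (i j : Fin r) → i < j → G.Walk (f i) (f j)),
    Function.Injective f ∧
    (∀ i j hij, (P i j hij).IsPath) ∧
    (∀ i j hij x, x ∈ (P i j hij).support → x ≠ f i → x ≠ f j → ∀ l, x ≠ f l) ∧
    (∀ i j hij i' j' hij', (i, j) ≠ (i', j') →
      ∀ x, x ∈ (P i j hij).support → x ∈ (P i' j' hij').support →
        (x = f i ∨ x = f j) ∧ (x = f i' ∨ x = f j'))

/-- `G` contains the complete graph `K_n` as a minor, witnessed by `n` nonempty,
pairwise disjoint, connected branch sets joined pairwise by edges. -/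
def HasKMinor (G : SimpleGraph V) (n : ℕ) : Prop :=
  ∃ B : Fin n → Set V,
    (∀ i, (B i).Nonempty) ∧
    (∀ i, (G.induce (B i)).Connected) ∧
    (Pairwise fun i j => Disjoint (B i) (B j)) ∧
    (∀ i j, i ≠ j → ∃ a ∈ B i, ∃ b ∈ B j, G.Adj a b)

/-!
Menger's theorem yields either a small separator or `2 ^ n * k` disjoint `X`-`Y`-paths, where `n` is
the number of colours of a strong edge colouring of `G`. The colour classes are induced matchings,
and one class `M` at a time is prevented from joining two of the paths, at the price of halving
their number. To this end, take the paths `P i` minimal and consider the graph formed by them and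
the edges of `M` between them. Contracting `M` merges at most two vertices into one, so a set
separating `X` from `Y` in the contracted graph has at least half as many vertices as there are
paths, and Menger's theorem provides half as many disjoint paths `Q j` there. Lifted back and made
minimal, distinct `Q j` are joined by no edge of `M`, nor by an edge of a single `P i`: a vertex
that is not matched by `M` keeps its two neighbours on `P i`, so such an edge would have both ends
matched and would belong to `M`. The greedy bound on the strong chromatic index gives
`n = 2 * Δ * (Δ - 1) + 1`.
-/

section Chains

variable {α β : Type*} {r r' : α → α → Prop} {X Y T : Set α} {l l₁ l₂ : List α} {v : α}

/-- An `X`-`Y`-walk of the digraph with arc relation `r`, given by its nonempty list of vertices.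
Phrasing it for relations rather than simple graphs makes it directed and leaves room for the loops
that contractions create. -/
def IsChainBetween (r : α → α → Prop) (X Y : Set α) (l : List α) : Prop :=
  l.IsChain r ∧ (∃ x ∈ l.head?, x ∈ X) ∧ ∃ y ∈ l.getLast?, y ∈ Y

/-- `S` separates `X` and `Y` in the digraph with arc relation `r`: it meets every `X`-`Y`-walk. -/
def IsSeparator (r : α → α → Prop) (X Y S : Set α) : Prop :=
  ∀ l, IsChainBetween r X Y l → ∃ z ∈ l, z ∈ S

theorem isChainBetween_flip_reverse :
    IsChainBetween (flip r) Y X l.reverse ↔ IsChainBetween r X Y l := by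
  simp only [IsChainBetween, List.isChain_reverse, List.head?_reverse, List.getLast?_reverse,
    and_comm (a := ∃ x ∈ l.head?, x ∈ X)]
  rfl

theorem isSeparator_flip {S : Set α} : IsSeparator (flip r) Y X S ↔ IsSeparator r X Y S := by
  refine ⟨fun h l hl => ?_, fun h l hl => ?_⟩
  · simpa using h l.reverse (isChainBetween_flip_reverse.2 hl)
  · simpa using h l.reverse (isChainBetween_flip_reverse.1 (by simpa using hl))

namespace IsChainBetween

theorem ne_nil (h : IsChainBetween r X Y l) : l ≠ [] := by
  rintro rfl
  simp [IsChainBetween] at h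

theorem imp_of_mem {X' Y' : Set α} (h : IsChainBetween r X Y l)
    (hr : ∀ a ∈ l, ∀ b ∈ l, r a b → r' a b) (hX : X ∩ {v | v ∈ l} ⊆ X')
    (hY : Y ∩ {v | v ∈ l} ⊆ Y') : IsChainBetween r' X' Y' l := by
  obtain ⟨hchain, ⟨x, hx, hxX⟩, ⟨y, hy, hyY⟩⟩ := h
  exact ⟨hchain.imp_of_mem_imp fun a b ha hb => hr a ha b hb,
    ⟨x, hx, hX ⟨hxX, List.mem_of_mem_head? hx⟩⟩, ⟨y, hy, hY ⟨hyY, List.mem_of_mem_getLast? hy⟩⟩⟩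

theorem mono {X' Y' : Set α} (h : IsChainBetween r X Y l) (hr : ∀ a b, r a b → r' a b)
    (hX : X ⊆ X') (hY : Y ⊆ Y') : IsChainBetween r' X' Y' l :=
  h.imp_of_mem (fun a _ b _ => hr a b) (Set.inter_subset_left.trans hX)
    (Set.inter_subset_left.trans hY)

theorem restrict (h : IsChainBetween r X Y l) {W : Set α} (hW : ∀ v ∈ l, v ∈ W) :
    IsChainBetween (fun a b => r a b ∧ a ∈ W ∧ b ∈ W) X Y l :=
  h.imp_of_mem (fun a ha b hb hab => ⟨hab, hW a ha, hW b hb⟩) Set.inter_subset_left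
    Set.inter_subset_left

end IsChainBetween

theorem isChainBetween_singleton : IsChainBetween r X Y [v] ↔ v ∈ X ∧ v ∈ Y := by
  simp [IsChainBetween]

theorem isChainBetween_append_cons : IsChainBetween r X Y (l₁ ++ v :: l₂) ↔
    IsChainBetween r X {v} (l₁ ++ [v]) ∧ IsChainBetween r {v} Y (v :: l₂) := by
  have hhead : (l₁ ++ v :: l₂).head? = (l₁ ++ [v]).head? := by simp [List.head?_append]
  have hlast : (l₁ ++ v :: l₂).getLast? = (v :: l₂).getLast? := by
    simp [List.getLast?_append, List.getLast?_cons]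
  unfold IsChainBetween
  rw [List.isChain_split, hhead, hlast]
  simp only [List.head?_append, List.head?_cons, Option.or_some, Option.mem_def,
    Option.some.injEq, exists_eq_left', List.getLast?_append, List.getLast?_singleton,
    Option.some_or, Set.mem_singleton_iff, and_true, true_and]
  tauto

theorem isChainBetween_cons_cons {w : α} : IsChainBetween r {v} Y (v :: w :: l) ↔
    r v w ∧ IsChainBetween r {w} Y (w :: l) := by
  simp [IsChainBetween, and_assoc]

theorem isChainBetween_cons :
    IsChainBetween r X Y (v :: l) ↔ v ∈ X ∧ IsChainBetween r {v} Y (v :: l) := by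
  simpa [isChainBetween_singleton] using isChainBetween_append_cons (l₁ := []) (r := r) (X := X)

namespace IsChainBetween

theorem forall_mem {W : Set α} (h : IsChainBetween r X Y l) (hX : X ⊆ W)
    (hr : ∀ a b, r a b → b ∈ W) : ∀ v ∈ l, v ∈ W := by
  intro v hv
  obtain ⟨l₁, l₂, rfl⟩ := List.mem_iff_append.1 hv
  rcases l₁.eq_nil_or_concat' with rfl | ⟨l₁, a, rfl⟩
  · exact hX (isChainBetween_cons.1 h).1
  · exact hr a v ((List.isChain_append.1 h.1).2.2 a (by simp) v (by simp))

theorem exists_prefix_to (h : IsChainBetween r X Y l) (hT : ∃ z ∈ l, z ∈ T) :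
    ∃ l₁ t, IsChainBetween r X {t} (l₁ ++ [t]) ∧ l₁ ++ [t] ⊆ l ∧ t ∈ T ∧ ∀ z ∈ l₁, z ∉ T := by
  classical
  obtain ⟨t, ht⟩ : ∃ t, l.find? (· ∈ T) = some t := by
    simpa [← Option.isSome_iff_exists] using hT
  obtain ⟨htT, l₁, l₂, rfl, hl₁⟩ := List.find?_eq_some_iff_append.1 ht
  exact ⟨l₁, t, (isChainBetween_append_cons.1 h).1, by simp, by simpa using htT, by simpa using hl₁⟩

theorem exists_suffix_from (h : IsChainBetween r X Y l) (hT : ∃ z ∈ l, z ∈ T) :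
    ∃ t l₂, IsChainBetween r {t} Y (t :: l₂) ∧ t :: l₂ ⊆ l ∧ t ∈ T ∧ ∀ z ∈ l₂, z ∉ T := by
  obtain ⟨l₁, t, hchain, hsub, ht, hl₁⟩ :=
    (isChainBetween_flip_reverse.2 h).exists_prefix_to (T := T) (by simpa using hT)
  refine ⟨t, l₁.reverse, ?_, fun z hz => ?_, ht, by simpa using hl₁⟩
  · rw [← isChainBetween_flip_reverse]
    simpa using hchain
  · simpa using hsub (by simpa [or_comm] using hz)

theorem exists_join {a b : α} (hl : IsChainBetween r X {a} (l₁ ++ [a]))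
    (hm : IsChainBetween r {b} Y (b :: l₂)) (hab : a = b ∨ r a b) :
    ∃ l, IsChainBetween r X Y l ∧ ∀ v ∈ l, v ∈ l₁ ++ [a] ∨ v ∈ b :: l₂ := by
  rcases hab with rfl | hab
  · refine ⟨l₁ ++ a :: l₂, isChainBetween_append_cons.2 ⟨hl, hm⟩, fun v hv => ?_⟩
    simp only [List.mem_append, List.mem_cons] at hv ⊢
    tauto
  · refine ⟨l₁ ++ a :: b :: l₂, isChainBetween_append_cons.2
      ⟨hl, isChainBetween_cons_cons.2 ⟨hab, hm⟩⟩, fun v hv => ?_⟩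
    simp only [List.mem_append, List.mem_cons] at hv ⊢
    tauto

theorem map (h : IsChainBetween r X Y l) (π : α → β) :
    IsChainBetween (Relation.Map r π π) (π '' X) (π '' Y) (l.map π) := by
  obtain ⟨hchain, ⟨x, hx, hxX⟩, ⟨y, hy, hyY⟩⟩ := h
  refine ⟨?_, ⟨π x, ?_, x, hxX, rfl⟩, ⟨π y, ?_, y, hyY, rfl⟩⟩
  · exact (List.isChain_map π).2 (hchain.imp fun a b hab => ⟨a, b, hab, rfl, rfl⟩)
  · rw [List.head?_map]; exact Option.mem_map_of_mem π hx
  · rw [List.getLast?_map]; exact Option.mem_map_of_mem π hy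

theorem exists_lift_cons {π : α → β} (hπ : ∀ u v, π u = π v → u = v ∨ r u v) {L : List β} :
    ∀ {u : α}, IsChainBetween (Relation.Map r π π) {π u} (π '' Y) (π u :: L) →
      ∃ l, IsChainBetween r {u} Y (u :: l) ∧ ∀ v ∈ l, π v ∈ π u :: L := by
  induction L with
  | nil =>
    intro u h
    obtain ⟨-, y, hyY, hyu⟩ := isChainBetween_singleton.1 h
    rcases hπ u y hyu.symm with rfl | huy
    · exact ⟨[], isChainBetween_singleton.2 ⟨rfl, hyY⟩, by simp⟩
    · exact ⟨[y], isChainBetween_cons_cons.2 ⟨huy, isChainBetween_singleton.2 ⟨rfl, hyY⟩⟩,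
        by simp [hyu]⟩
  | cons b L ih =>
    intro u h
    obtain ⟨⟨u', w, hu'w, hu', rfl⟩, hL⟩ := isChainBetween_cons_cons.1 h
    obtain ⟨l, hl, hlL⟩ := ih hL
    have hwl : ∀ v ∈ w :: l, π v ∈ π u :: π w :: L := by
      simpa using fun v hv => Or.inr (by simpa using hlL v hv)
    rcases hπ u u' hu'.symm with rfl | huu'
    · exact ⟨w :: l, isChainBetween_cons_cons.2 ⟨hu'w, hl⟩, hwl⟩
    · exact ⟨u' :: w :: l, isChainBetween_cons_cons.2
        ⟨huu', isChainBetween_cons_cons.2 ⟨hu'w, hl⟩⟩, by simpa [hu'] using hwl⟩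

theorem exists_lift {π : α → β} (hπ : ∀ u v, π u = π v → u = v ∨ r u v) {L : List β}
    (h : IsChainBetween (Relation.Map r π π) (π '' X) (π '' Y) L) :
    ∃ l, IsChainBetween r X Y l ∧ ∀ v ∈ l, π v ∈ L := by
  obtain ⟨a, L, rfl⟩ := List.exists_cons_of_ne_nil h.ne_nil
  obtain ⟨⟨x, hxX, rfl⟩, hL⟩ := isChainBetween_cons.1 h
  obtain ⟨l, hl, hlL⟩ := exists_lift_cons hπ hL
  exact ⟨x :: l, isChainBetween_cons.2 ⟨hxX, hl⟩, by simpa using hlL⟩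

end IsChainBetween

end Chains

section Menger

variable {α ι : Type*} {r r' : α → α → Prop} {X Y : Set α} {P : ι → List α}

/-- A linkage: a family of pairwise vertex-disjoint `X`-`Y`-walks. -/
structure IsLinkage (r : α → α → Prop) (X Y : Set α) (P : ι → List α) : Prop where
  chain : ∀ i, IsChainBetween r X Y (P i)
  disjoint : Pairwise fun i j => (P i).Disjoint (P j)

theorem eq_of_mem_of_pairwise_disjoint (hP : Pairwise fun i j => (P i).Disjoint (P j)) {i j : ι}
    {v : α} (hi : v ∈ P i) (hj : v ∈ P j) : i = j :=
  hP.eq fun h => h hi hj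

theorem injective_of_mem_of_pairwise_disjoint (hP : Pairwise fun i j => (P i).Disjoint (P j))
    {f : ι → α} (hf : ∀ i, f i ∈ P i) : Function.Injective f :=
  fun i j hij => eq_of_mem_of_pairwise_disjoint hP (hf i) (hij ▸ hf j)

namespace IsLinkage

theorem eq_of_mem (hP : IsLinkage r X Y P) {i j : ι} {v : α} (hi : v ∈ P i) (hj : v ∈ P j) :
    i = j :=
  eq_of_mem_of_pairwise_disjoint hP.disjoint hi hj

theorem of_subset {X' Y' : Set α} {Q : ι → List α} (hP : IsLinkage r X Y P)
    (hQ : ∀ i, IsChainBetween r' X' Y' (Q i)) (hQP : ∀ i, Q i ⊆ P i) : IsLinkage r' X' Y' Q :=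
  ⟨hQ, fun _ _ hij _ hi hj => hP.disjoint hij (hQP _ hi) (hQP _ hj)⟩

theorem mono {X' Y' : Set α} (hP : IsLinkage r X Y P) (hr : ∀ a b, r a b → r' a b)
    (hX : X ⊆ X') (hY : Y ⊆ Y') : IsLinkage r' X' Y' P :=
  ⟨fun i => (hP.chain i).mono hr hX hY, hP.disjoint⟩

theorem exists_injective_mem_separator {S : Set α} (hP : IsLinkage r X Y P)
    (hS : IsSeparator r X Y S) :
    ∃ f : ι → α, Function.Injective f ∧ ∀ i, f i ∈ P i ∧ f i ∈ S := by
  choose f hfP hfS using fun i => hS (P i) (hP.chain i)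
  exact ⟨f, injective_of_mem_of_pairwise_disjoint hP.disjoint hfP, fun i => ⟨hfP i, hfS i⟩⟩

end IsLinkage

theorem IsSeparator.of_insert_source {S T : Set α} {x : α} (hr : ∀ a b, r a b → a ≠ x → r' a b)
    (hS : IsSeparator r' X Y S) (hT : IsSeparator r' X (insert x S) T) : IsSeparator r X Y T := by
  intro l hl
  have hmeets : ∃ z ∈ l, z ∈ insert x S := by
    by_cases hx : x ∈ l
    · exact ⟨x, hx, Set.mem_insert x S⟩
    · obtain ⟨z, hzl, hzS⟩ := hS l <| hl.imp_of_mem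
        (fun a ha b _ hab => hr a b hab (ne_of_mem_of_not_mem ha hx))
        Set.inter_subset_left Set.inter_subset_left
      exact ⟨z, hzl, Set.mem_insert_of_mem x hzS⟩
  obtain ⟨l₁, t, ⟨hchain, hhead, -⟩, hsub, ht, hl₁⟩ := hl.exists_prefix_to hmeets
  have hne : ∀ a ∈ l₁, a ≠ x := fun a ha => by
    rintro rfl
    exact hl₁ a ha (Set.mem_insert a S)
  have hchain' : (l₁ ++ [t]).IsChain r' := by
    rw [List.isChain_append] at hchain ⊢
    exact ⟨hchain.1.imp_of_mem_imp fun a b ha _ hab => hr a b hab (hne a ha), by simp,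
      fun a ha b hb => hr a b (hchain.2.2 a ha b hb) (hne a (List.mem_of_mem_getLast? ha))⟩
  obtain ⟨z, hz, hzT⟩ := hT (l₁ ++ [t]) ⟨hchain', hhead, t, by simp, ht⟩
  exact ⟨z, hsub hz, hzT⟩

theorem IsSeparator.of_insert_target {S T : Set α} {y : α} (hr : ∀ a b, r a b → b ≠ y → r' a b)
    (hS : IsSeparator r' X Y S) (hT : IsSeparator r' (insert y S) Y T) : IsSeparator r X Y T :=
  isSeparator_flip.1 <| (isSeparator_flip.2 hS).of_insert_source (r := flip r)
    (fun a b hab hay => hr b a hab hay) (isSeparator_flip.2 hT)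

theorem IsSeparator.eq_ends_of_mem {S : Set α} (hS : IsSeparator r X Y S) {l m : List α}
    {a b v : α} (hl : IsChainBetween r X {a} (l ++ [a])) (hm : IsChainBetween r {b} Y (b :: m))
    (hlS : ∀ z ∈ l, z ∉ S) (hmS : ∀ z ∈ m, z ∉ S) (hvl : v ∈ l ++ [a]) (hvm : v ∈ b :: m) :
    v = a ∧ v = b ∧ v ∈ S := by
  have hvS : v ∈ S := by
    obtain ⟨s, t, hst⟩ := List.mem_iff_append.1 hvl
    obtain ⟨s', t', hst'⟩ := List.mem_iff_append.1 hvm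
    have hs : ∀ z ∈ s, z ∉ S := fun z hz => hlS z <| by
      have hdrop := congrArg List.dropLast hst
      rw [List.dropLast_concat, List.dropLast_append_of_ne_nil (List.cons_ne_nil v t)] at hdrop
      exact hdrop ▸ List.mem_append_left _ hz
    have ht' : ∀ z ∈ t', z ∉ S := fun z hz => hmS z <| by
      cases s' <;> simp_all
    rw [hst] at hl
    rw [hst'] at hm
    obtain ⟨z, hz, hzS⟩ := hS (s ++ v :: t') (isChainBetween_append_cons.2
      ⟨(isChainBetween_append_cons.1 hl).1, (isChainBetween_append_cons.1 hm).2⟩)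
    rcases List.mem_append.1 hz with hzs | hzt
    · exact absurd hzS (hs z hzs)
    · rcases List.mem_cons.1 hzt with rfl | hzt
      · exact hzS
      · exact absurd hzS (ht' z hzt)
  have hvl' : v ∉ l := fun hv => hlS v hv hvS
  have hvm' : v ∉ m := fun hv => hmS v hv hvS
  exact ⟨by simpa [hvl'] using hvl, by simpa [hvm'] using hvm, hvS⟩

theorem exists_isLinkage_join {l m : ι → List α} {a b : ι → α}
    (hl : ∀ i, IsChainBetween r X {a i} (l i ++ [a i]))
    (hm : ∀ i, IsChainBetween r {b i} Y (b i :: m i))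
    (hab : ∀ i, a i = b i ∨ r (a i) (b i))
    (hldisj : Pairwise fun i j => (l i ++ [a i]).Disjoint (l j ++ [a j]))
    (hmdisj : Pairwise fun i j => (b i :: m i).Disjoint (b j :: m j))
    (hcross : ∀ i j v, v ∈ l i ++ [a i] → v ∈ b j :: m j → i = j) :
    ∃ P : ι → List α, IsLinkage r X Y P := by
  choose P hP hPmem using fun i => (hl i).exists_join (hm i) (hab i)
  refine ⟨P, hP, fun i j hij v hi hj => ?_⟩
  rcases hPmem i v hi with hi | hi <;> rcases hPmem j v hj with hj | hj
  · exact hldisj hij hi hj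
  · exact hij (hcross i j v hi hj)
  · exact hij (hcross j i v hj hi).symm
  · exact hmdisj hij hi hj

theorem notMem_of_injective_of_mem_insert [Fintype ι] [DecidableEq α] {S : Finset α} {x : α}
    {a : ι → α} (hS : S.card < Fintype.card ι) (ha : Function.Injective a)
    (haS : ∀ i, a i ∈ insert x S) : x ∉ S := by
  intro hx
  rw [Finset.insert_eq_of_mem hx] at haS
  exact hS.not_ge (Finset.card_le_card_of_injOn a (fun i _ => haS i) ha.injOn)

theorem exists_injective_reindex [Fintype ι] [DecidableEq α] {S : Finset α} {x y : α}
    {a b : ι → α} (hS : S.card < Fintype.card ι) (ha : Function.Injective a)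
    (hb : Function.Injective b) (haS : ∀ i, a i ∈ insert x S) (hbS : ∀ i, b i ∈ insert y S) :
    ∃ σ : ι → ι, Function.Injective σ ∧
      ∀ i, (a i ∈ S ∧ a i = b (σ i)) ∨ (a i = x ∧ b (σ i) = y) := by
  have hy : y ∉ S := notMem_of_injective_of_mem_insert hS hb hbS
  have hsurj : ∀ z ∈ insert y S, ∃ j, b j = z := fun z hz => by
    obtain ⟨j, -, hj⟩ := Finset.surjOn_of_injOn_of_card_le (s := Finset.univ) b (fun i _ => hbS i)
      hb.injOn (by simpa [Finset.card_insert_of_notMem hy] using hS) hz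
    exact ⟨j, hj⟩
  have hσ : ∀ i, ∃ j, (a i ∈ S ∧ a i = b j) ∨ (a i = x ∧ b j = y) := fun i => by
    rcases Finset.mem_insert.1 (haS i) with hx | hiS
    · obtain ⟨j, hj⟩ := hsurj y (Finset.mem_insert_self y S)
      exact ⟨j, .inr ⟨hx, hj⟩⟩
    · obtain ⟨j, hj⟩ := hsurj (a i) (Finset.mem_insert_of_mem hiS)
      exact ⟨j, .inl ⟨hiS, hj.symm⟩⟩
  choose σ hσ using hσ
  refine ⟨σ, fun i j hij => ha ?_, hσ⟩
  have hi := hσ i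
  have hj := hσ j
  rw [← hij] at hj
  grind

theorem exists_isLinkage_of_linkages_to_separator [Fintype ι] [DecidableEq α] {S : Finset α}
    {x y : α} {A B : ι → List α} (hrr' : ∀ a b, r' a b → r a b) (hxy : r x y)
    (hcard : S.card < Fintype.card ι) (hS : IsSeparator r' X Y S)
    (hA : IsLinkage r' X ↑(insert x S) A) (hB : IsLinkage r' ↑(insert y S) Y B) :
    ∃ P : ι → List α, IsLinkage r X Y P := by
  choose l a hl hlA haS hlS using fun i => (hA.chain i).exists_prefix_to <| by
    obtain ⟨-, -, z, hz, hzS⟩ := hA.chain i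
    exact ⟨z, List.mem_of_mem_getLast? hz, hzS⟩
  choose b m hm hmB hbS hmS using fun i => (hB.chain i).exists_suffix_from <| by
    obtain ⟨-, ⟨z, hz, hzS⟩, -⟩ := hB.chain i
    exact ⟨z, List.mem_of_mem_head? hz, hzS⟩
  simp only [Finset.mem_coe, Finset.mem_insert, not_or] at hlS hmS
  have ha : Function.Injective a :=
    injective_of_mem_of_pairwise_disjoint hA.disjoint fun i => hlA i (by simp)
  have hb : Function.Injective b :=
    injective_of_mem_of_pairwise_disjoint hB.disjoint fun i => hmB i (by simp)
  have hx : x ∉ S := notMem_of_injective_of_mem_insert hcard ha haS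
  obtain ⟨σ, hσ, hab⟩ := exists_injective_reindex hcard ha hb haS hbS
  refine exists_isLinkage_join (l := l) (a := a) (m := m ∘ σ) (b := b ∘ σ)
    (fun i => (hl i).mono hrr' subset_rfl subset_rfl)
    (fun i => (hm (σ i)).mono hrr' subset_rfl subset_rfl)
    (fun i => (hab i).imp And.right fun ⟨hax, hby⟩ => by simpa [hax, hby] using hxy)
    (fun i j hij v hi hj => hA.disjoint hij (hlA i hi) (hlA j hj))
    (fun i j hij v hi hj => hB.disjoint (hσ.ne hij) (hmB _ hi) (hmB _ hj))
    fun i j v hi hj => ?_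
  obtain ⟨hva, hvb, hvS⟩ := hS.eq_ends_of_mem (hl i) (hm (σ j)) (fun z hz => (hlS i z hz).2)
    (fun z hz => (hmS (σ j) z hz).2) hi hj
  rcases hab i with ⟨-, hai⟩ | ⟨hai, -⟩
  · exact hσ (hb (hai.symm.trans (hva.symm.trans hvb)))
  · exact absurd (by simpa [hva, hai] using hvS) hx

theorem exists_isLinkage_or_separator_of_forall_not (hr : ∀ a b, ¬ r a b) (X Y : Set α) (k : ℕ) :
    (∃ P : Fin k → List α, IsLinkage r X Y P) ∨
      ∃ S : Finset α, S.card < k ∧ IsSeparator r X Y S := by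
  by_cases hk : ∃ T : Finset α, (T : Set α) ⊆ X ∩ Y ∧ T.card = k
  · obtain ⟨T, hT, hTk⟩ := hk
    let e := (T.equivFinOfCardEq hTk).symm
    refine .inl ⟨fun i => [(e i : α)], fun i => isChainBetween_singleton.2 (hT (e i).2),
      fun i j hij => ?_⟩
    simpa [Subtype.val_inj, eq_comm] using hij
  · have hfin : (X ∩ Y).Finite := Set.not_infinite.1 fun h => hk (h.exists_subset_card_eq k)
    refine .inr ⟨hfin.toFinset, ?_, fun l hl => ?_⟩
    · by_contra! hcard
      obtain ⟨T, hT, hTk⟩ := Finset.exists_subset_card_eq hcard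
      exact hk ⟨T, fun t ht => hfin.mem_toFinset.1 (hT ht), hTk⟩
    · rcases l with _ | ⟨a, _ | ⟨b, l⟩⟩
      · exact absurd rfl hl.ne_nil
      · exact ⟨a, by simp, hfin.mem_toFinset.2 (isChainBetween_singleton.1 hl)⟩
      · exact absurd hl.1.rel (hr a b)

theorem exists_isLinkage_or_separator_of_finset (E : Finset (α × α)) (X Y : Set α) (k : ℕ) :
    (∃ P : Fin k → List α, IsLinkage (fun a b => (a, b) ∈ E) X Y P) ∨
      ∃ S : Finset α, S.card < k ∧ IsSeparator (fun a b => (a, b) ∈ E) X Y S := by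
  classical
  induction E using Finset.induction_on generalizing X Y with
  | empty => exact exists_isLinkage_or_separator_of_forall_not (by simp) X Y k
  | insert e E _ ih =>
    obtain ⟨x, y⟩ := e
    have hE : ∀ a b, (a, b) ∈ E → (a, b) ∈ insert (x, y) E := fun a b => Finset.mem_insert_of_mem
    obtain ⟨P, hP⟩ | ⟨S, hScard, hS⟩ := ih X Y
    · exact .inl ⟨P, hP.mono hE subset_rfl subset_rfl⟩
    obtain ⟨A, hA⟩ | ⟨T, hTcard, hT⟩ := ih X ↑(insert x S)
    · obtain ⟨B, hB⟩ | ⟨T, hTcard, hT⟩ := ih ↑(insert y S) Y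
      · exact .inl <| exists_isLinkage_of_linkages_to_separator hE
          (Finset.mem_insert_self (x, y) E) (by simpa using hScard) hS hA hB
      · exact .inr ⟨T, hTcard, hS.of_insert_target (y := y) (by grind) (by simpa using hT)⟩
    · exact .inr ⟨T, hTcard, hS.of_insert_source (x := x) (by grind) (by simpa using hT)⟩

/-- A separator with at most `k` vertices lies on the `k` disjoint walks of `P`. Hence there are
only finitely many candidates, and a finite subgraph containing one walk avoiding each of them
suffices. -/
theorem IsLinkage.exists_succ_or_separator {k : ℕ} {P : Fin k → List α}
    (hP : IsLinkage r X Y P) :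
    (∃ Q : Fin (k + 1) → List α, IsLinkage r X Y Q) ∨
      ∃ S : Finset α, S.card < k + 1 ∧ IsSeparator r X Y S := by
  classical
  by_contra! ⟨hlinkage, hsep⟩
  let U : Finset α := Finset.univ.biUnion fun i => (P i).toFinset
  have havoid : ∀ S : Finset α, ∃ l, S.card < k + 1 → IsChainBetween r X Y l ∧ ∀ z ∈ l, z ∉ S :=
    fun S => by
      by_cases hS : S.card < k + 1
      · simpa [IsSeparator, hS] using hsep S hS
      · exact ⟨[], fun h => absurd h hS⟩
  choose escape hescape using havoid
  let W : Finset α := U ∪ U.powerset.biUnion fun S => (escape S).toFinset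
  let E : Finset (α × α) := {e ∈ W ×ˢ W | r e.1 e.2}
  have hE : (fun a b => (a, b) ∈ E) = fun a b => r a b ∧ a ∈ (W : Set α) ∧ b ∈ (W : Set α) := by
    ext a b
    simp [E, and_comm]
  have hmenger := exists_isLinkage_or_separator_of_finset E X Y (k + 1)
  rw [hE] at hmenger
  obtain ⟨Q, hQ⟩ | ⟨T, hTcard, hT⟩ := hmenger
  · exact hlinkage Q (hQ.mono (fun a b h => h.1) subset_rfl subset_rfl)
  have hPW : ∀ i, ∀ v ∈ P i, v ∈ U := fun i v hv => by simpa [U] using ⟨i, hv⟩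
  have hPr := hP.of_subset (fun i => (hP.chain i).restrict (W := W) fun v hv => by
    simpa [W] using .inl (hPW i v hv)) fun i => List.Subset.refl (P i)
  have hTU : T ⊆ U := fun z hz => by
    obtain ⟨f, hf, hfPT⟩ := hPr.exists_injective_mem_separator hT
    obtain ⟨i, -, rfl⟩ := Finset.surjOn_of_injOn_of_card_le (s := Finset.univ) f
      (fun i _ => (hfPT i).2) hf.injOn (by simpa using Nat.lt_succ_iff.1 hTcard) hz
    exact hPW i _ (hfPT i).1
  obtain ⟨hchain, hnot⟩ := hescape T hTcard
  obtain ⟨z, hz, hzT⟩ := hT _ <| hchain.restrict fun v hv => by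
    simpa [W] using .inr ⟨T, hTU, hv⟩
  exact hnot z hz hzT

theorem exists_isLinkage_or_separator (r : α → α → Prop) (X Y : Set α) (k : ℕ) :
    (∃ P : Fin k → List α, IsLinkage r X Y P) ∨
      ∃ S : Finset α, S.card < k ∧ IsSeparator r X Y S := by
  induction k with
  | zero => exact .inl ⟨Fin.elim0, fun i => i.elim0, fun i => i.elim0⟩
  | succ k ih =>
    obtain ⟨P, hP⟩ | ⟨S, hScard, hS⟩ := ih
    · exact hP.exists_succ_or_separator
    · exact .inr ⟨S, hScard.trans k.lt_succ_self, hS⟩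

end Menger

section MinimalChains

variable {α : Type*} {r : α → α → Prop} {X Y : Set α} {l l₁ l₂ : List α} {u v : α}

/-- An `X`-`Y`-walk that cannot be shortened inside its own vertex set. In a simple graph this is an
induced path meeting `X` and `Y` only in its ends. -/
def IsMinimalChain (r : α → α → Prop) (X Y : Set α) (l : List α) : Prop :=
  IsChainBetween r X Y l ∧ ∀ l', IsChainBetween r X Y l' → l' ⊆ l → l.length ≤ l'.length

theorem IsChainBetween.exists_isMinimalChain (h : IsChainBetween r X Y l) :
    ∃ l', IsMinimalChain r X Y l' ∧ l' ⊆ l := by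
  obtain ⟨l', ⟨hl', hsub⟩, hmin⟩ := exists_minimalFor_of_wellFoundedLT
    (fun l' => IsChainBetween r X Y l' ∧ l' ⊆ l) List.length ⟨l, h, List.Subset.refl l⟩
  refine ⟨l', ⟨hl', fun m hm hml' => ?_⟩, hsub⟩
  exact (le_total _ _).elim id (hmin ⟨hm, List.Subset.trans hml' hsub⟩)

theorem IsLinkage.exists_isMinimalChain {ι : Type*} {P : ι → List α} (hP : IsLinkage r X Y P) :
    ∃ Q : ι → List α, IsLinkage r X Y Q ∧ (∀ i, IsMinimalChain r X Y (Q i)) ∧ ∀ i, Q i ⊆ P i := by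
  choose Q hQ hQP using fun i => (hP.chain i).exists_isMinimalChain
  exact ⟨Q, hP.of_subset (fun i => (hQ i).1) hQP, hQ, hQP⟩

namespace IsMinimalChain

theorem flip_reverse (h : IsMinimalChain r X Y l) : IsMinimalChain (flip r) Y X l.reverse := by
  refine ⟨isChainBetween_flip_reverse.2 h.1, fun l' hl' hsub => ?_⟩
  have hrev : IsChainBetween r X Y l'.reverse :=
    isChainBetween_flip_reverse.1 (by rwa [List.reverse_reverse])
  simpa using h.2 l'.reverse hrev fun w hw => by simpa using hsub (List.mem_reverse.1 hw)

theorem flip_append_cons (h : IsMinimalChain r X Y (l₁ ++ v :: l₂)) :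
    IsMinimalChain (flip r) Y X (l₂.reverse ++ v :: l₁.reverse) := by
  simpa using h.flip_reverse

theorem mem_source_iff (h : IsMinimalChain r X Y (l₁ ++ v :: l₂)) : v ∈ X ↔ l₁ = [] := by
  refine ⟨fun hv => ?_, ?_⟩
  · have hlen := h.2 (v :: l₂) (isChainBetween_cons.2 ⟨hv, (isChainBetween_append_cons.1 h.1).2⟩)
      (List.subset_append_right l₁ _)
    simpa using hlen
  · rintro rfl
    exact (isChainBetween_cons.1 h.1).1

theorem mem_target_iff (h : IsMinimalChain r X Y (l₁ ++ v :: l₂)) : v ∈ Y ↔ l₂ = [] := by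
  simpa using h.flip_append_cons.mem_source_iff

theorem mem_head?_of_rel (h : IsMinimalChain r X Y (l₁ ++ v :: l₂)) (hu : u ∈ l₂) (hvu : r v u) :
    u ∈ l₂.head? := by
  obtain ⟨s, t, rfl⟩ := List.mem_iff_append.1 hu
  have hsplit := isChainBetween_append_cons.1 h.1
  have hsuffix : IsChainBetween r {u} Y (u :: t) :=
    (isChainBetween_append_cons (l₁ := v :: s).1 hsplit.2).2
  have hlen := h.2 (l₁ ++ v :: u :: t)
    (isChainBetween_append_cons.2 ⟨hsplit.1, isChainBetween_cons_cons.2 ⟨hvu, hsuffix⟩⟩)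
    (by grind)
  have hs : s = [] := by simpa using hlen
  simp [hs]

theorem mem_getLast?_of_rel (h : IsMinimalChain r X Y (l₁ ++ v :: l₂)) (hu : u ∈ l₁)
    (huv : r u v) : u ∈ l₁.getLast? := by
  simpa using h.flip_append_cons.mem_head?_of_rel (List.mem_reverse.2 hu) huv

theorem notMem_right (h : IsMinimalChain r X Y (l₁ ++ v :: l₂)) : v ∉ l₂ := by
  intro hv
  obtain ⟨s, t, rfl⟩ := List.mem_iff_append.1 hv
  have hsplit := isChainBetween_append_cons.1 h.1
  have hlen := h.2 (l₁ ++ v :: t) (isChainBetween_append_cons.2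
    ⟨hsplit.1, (isChainBetween_append_cons (l₁ := v :: s).1 hsplit.2).2⟩)
    (by grind)
  simp at hlen
  omega

theorem disjoint (h : IsMinimalChain r X Y (l₁ ++ v :: l₂)) : l₁.Disjoint l₂ := by
  intro w hw₁ hw₂
  obtain ⟨s, t, rfl⟩ := List.mem_iff_append.1 hw₁
  rw [List.append_assoc, List.cons_append] at h
  exact h.notMem_right (by simp [hw₂])

end IsMinimalChain

variable {G H : SimpleGraph α} {X' Y' : Set α} {l' : List α}

namespace IsMinimalChain

theorem setOf_adj_eq (h : IsMinimalChain G.Adj X Y (l₁ ++ v :: l₂)) :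
    {w | w ∈ l₁ ++ v :: l₂ ∧ G.Adj v w} = {w | w ∈ l₁.getLast?} ∪ {w | w ∈ l₂.head?} := by
  ext w
  simp only [Set.mem_ofPred_eq, Set.mem_union]
  constructor
  · rintro ⟨hw, hvw⟩
    rcases List.mem_append.1 hw with hw | hw
    · exact .inl (h.mem_getLast?_of_rel hw hvw.symm)
    · rcases List.mem_cons.1 hw with rfl | hw
      · exact absurd hvw (G.loopless.irrefl w)
      · exact .inr (h.mem_head?_of_rel hw hvw)
  · have hchain := (List.isChain_append.1 h.1.1)
    rintro (hw | hw)
    · exact ⟨by simp [List.mem_of_mem_getLast? hw], (hchain.2.2 w hw v (by simp)).symm⟩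
    · exact ⟨by simp [List.mem_of_mem_head? hw], (List.isChain_cons.1 hchain.2.1).1 w hw⟩

open Classical in
theorem ncard_adj_add (h : IsMinimalChain G.Adj X Y l) (hv : v ∈ l) :
    {w | w ∈ l ∧ G.Adj v w}.ncard + (if v ∈ X then 1 else 0) + (if v ∈ Y then 1 else 0) = 2 := by
  obtain ⟨l₁, l₂, rfl⟩ := List.mem_iff_append.1 hv
  have hdisj := h.disjoint
  simp only [h.setOf_adj_eq, h.mem_source_iff, h.mem_target_iff]
  rcases l₁.eq_nil_or_concat' with rfl | ⟨l₁, a, rfl⟩ <;> rcases l₂ with _ | ⟨b, l₂⟩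
  · simp
  · simp
  · simp
  · have hab : a ≠ b := by
      rintro rfl
      exact hdisj (a := a) (by simp) (by simp)
    simpa [Set.singleton_union] using Set.ncard_pair hab.symm

/-- Counting its ends among the neighbours, every vertex of a minimal walk has degree two in it, so
a vertex cannot lose a neighbour without gaining another one. -/
theorem mem_of_adj_of_forall_adj (h : IsMinimalChain G.Adj X Y l)
    (h' : IsMinimalChain H.Adj X' Y' l') (hv : v ∈ l) (hv' : v ∈ l') (hX : X' ⊆ X) (hY : Y' ⊆ Y)
    (hadj : ∀ w ∈ l', H.Adj v w → w ∈ l ∧ G.Adj v w) (hu : u ∈ l) (hvu : G.Adj v u) : u ∈ l' := by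
  classical
  have hcount := h.ncard_adj_add hv
  have hcount' := h'.ncard_adj_add hv'
  have hXle : (if v ∈ X' then 1 else 0) ≤ if v ∈ X then 1 else 0 := by
    split_ifs <;> simp_all [hX _]
  have hYle : (if v ∈ Y' then 1 else 0) ≤ if v ∈ Y then 1 else 0 := by
    split_ifs <;> simp_all [hY _]
  have heq : {w | w ∈ l' ∧ H.Adj v w} = {w | w ∈ l ∧ G.Adj v w} :=
    Set.eq_of_subset_of_ncard_le (fun w hw => hadj w hw.1 hw.2) (by omega)
      (l.finite_toSet.subset fun w hw => hw.1)
  exact (heq.ge ⟨hu, hvu⟩).1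

end IsMinimalChain

end MinimalChains

section Contraction

variable {α β : Type*} {r : α → α → Prop} {X Y : Set α} {d N : ℕ} {P : Fin (d * N) → List α}
  {π : α → β}

namespace IsLinkage

theorem exists_isLinkage_map (hP : IsLinkage r X Y P) (hd : 0 < d)
    (hfib : ∀ b, (π ⁻¹' {b}).encard ≤ d) :
    ∃ L : Fin N → List β, IsLinkage (Relation.Map r π π) (π '' X) (π '' Y) L := by
  classical
  refine (exists_isLinkage_or_separator _ _ _ N).resolve_right ?_
  rintro ⟨S, hScard, hS⟩
  have hpre : IsSeparator r X Y (π ⁻¹' S) := fun l hl => by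
    simpa using hS (l.map π) (hl.map π)
  obtain ⟨f, hf, hfPS⟩ := hP.exists_injective_mem_separator hpre
  have hfiber : ∀ b, ({i | π (f i) = b} : Finset (Fin (d * N))).card ≤ d := fun b => by
    rw [← ENat.natCast_le_natCast, ← Set.encard_coe_eq_coe_finsetCard]
    exact (Set.encard_le_encard_of_injOn (by simp [Set.MapsTo]) hf.injOn).trans (hfib b)
  have hcard : d * N ≤ d * S.card := by
    simpa using Finset.card_le_mul_card_image_of_maps_to (s := Finset.univ) (f := π ∘ f)
      (fun i _ => (hfPS i).2) d fun b _ => hfiber b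
  exact hScard.not_ge (Nat.le_of_mul_le_mul_left hcard hd)

theorem exists_isLinkage_of_encard_fiber_le (hP : IsLinkage r X Y P) (hd : 0 < d)
    (hfib : ∀ b, (π ⁻¹' {b}).encard ≤ d) (hπ : ∀ u v, π u = π v → u = v ∨ r u v) :
    ∃ Q : Fin N → List α, IsLinkage r X Y Q ∧
      Pairwise fun i j => ∀ u ∈ Q i, ∀ v ∈ Q j, π u ≠ π v := by
  obtain ⟨L, hL⟩ := hP.exists_isLinkage_map hd hfib
  choose Q hQ hQL using fun i => (hL.chain i).exists_lift hπ
  have hne : Pairwise fun i j => ∀ u ∈ Q i, ∀ v ∈ Q j, π u ≠ π v := fun i j hij u hu v hv huv =>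
    hL.disjoint hij (hQL i u hu) (huv ▸ hQL j v hv)
  exact ⟨Q, ⟨hQ, fun i j hij v hi hj => hne hij v hi v hj rfl⟩, hne⟩

end IsLinkage

end Contraction

section InducedMatchings

variable {G : SimpleGraph V} {M : Set (Sym2 V)}

namespace IsInducedMatching

theorem subset {M' : Set (Sym2 V)} (hM : IsInducedMatching G M) (h : M' ⊆ M) :
    IsInducedMatching G M' :=
  ⟨h.trans hM.1, fun e he f hf => hM.2 e (h he) f (h hf)⟩

theorem eq_of_mem (hM : IsInducedMatching G M) {a b b' : V} (hb : s(a, b) ∈ M)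
    (hb' : s(a, b') ∈ M) : b = b' := by
  by_contra hne
  exact (hM.2 _ hb _ hb' (mt Sym2.congr_right.1 hne) a (by simp) a (by simp)).1 rfl

theorem mem_of_adj (hM : IsInducedMatching G M) {a a' b b' : V} (ha : s(a, a') ∈ M)
    (hb : s(b, b') ∈ M) (hab : G.Adj a b) : s(a, b) ∈ M := by
  by_cases heq : s(a, a') = s(b, b')
  · have hba' : b = a' := by
      have hmem : b ∈ s(a, a') := heq ▸ Sym2.mem_mk_left b b'
      exact (Sym2.mem_iff.1 hmem).resolve_left hab.ne'
    exact hba' ▸ ha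
  · exact absurd hab (hM.2 _ ha _ hb heq a (by simp) b (by simp)).2

/-- The partition of the vertices of `G` into the edges of an induced matching and the unmatched
vertices; its quotient contracts the matching. -/
def setoid (hM : IsInducedMatching G M) : Setoid V where
  r a b := a = b ∨ s(a, b) ∈ M
  iseqv.refl _ := .inl rfl
  iseqv.symm := Or.imp Eq.symm fun h => Sym2.eq_swap ▸ h
  iseqv.trans := by
    rintro a b c (rfl | hab) (rfl | hbc)
    · exact .inl rfl
    · exact .inr hbc
    · exact .inr hab
    · exact .inl (hM.eq_of_mem (Sym2.eq_swap ▸ hab) hbc)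

theorem mk_setoid_eq_iff (hM : IsInducedMatching G M) {a b : V} :
    Quotient.mk hM.setoid a = Quotient.mk hM.setoid b ↔ a = b ∨ s(a, b) ∈ M :=
  Quotient.eq

theorem encard_fiber_le_two (hM : IsInducedMatching G M) (q : Quotient hM.setoid) :
    (Quotient.mk hM.setoid ⁻¹' {q}).encard ≤ 2 := by
  induction q using Quotient.inductionOn with | h a => ?_
  by_cases ha : ∃ b, s(a, b) ∈ M
  · obtain ⟨b, hab⟩ := ha
    have hne : a ≠ b := (hM.1 hab : G.Adj a b).ne
    refine (Set.encard_le_encard (t := {a, b}) fun c hc => ?_).trans (Set.encard_pair hne).le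
    exact (hM.mk_setoid_eq_iff.1 hc).imp id fun hca => hM.eq_of_mem (Sym2.eq_swap ▸ hca) hab
  · refine (Set.encard_le_encard (t := {a}) fun c hc => ?_).trans (by simp)
    exact (hM.mk_setoid_eq_iff.1 hc).resolve_right fun hca => ha ⟨c, Sym2.eq_swap ▸ hca⟩

end IsInducedMatching

end InducedMatchings

section Halving

variable {G : SimpleGraph V} {X Y : Set V} {M : Set (Sym2 V)} {ι κ : Type*} {P : ι → List V}
  {Q : κ → List V} {N : ℕ}

/-- The edges of `G` that spoil non-adjacency of the family `P`: those joining distinct members. -/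
def crossEdges (G : SimpleGraph V) (P : ι → List V) : Set (Sym2 V) :=
  {e ∈ G.edgeSet | ∃ i j, i ≠ j ∧ ∃ a ∈ P i, ∃ b ∈ P j, e = s(a, b)}

/-- The graph on the vertices covered by `P` that keeps the edges of `G` inside a single member of
`P` and, among the edges between distinct members, only those in `M`. -/
def linkageGraph (G : SimpleGraph V) (P : ι → List V) (M : Set (Sym2 V)) : SimpleGraph V where
  Adj a b := G.Adj a b ∧ ∃ i j, a ∈ P i ∧ b ∈ P j ∧ (i = j ∨ s(a, b) ∈ M)
  symm := ⟨fun _ _ ⟨hab, i, j, ha, hb, h⟩ =>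
    ⟨hab.symm, j, i, hb, ha, h.imp Eq.symm fun h => Sym2.eq_swap ▸ h⟩⟩
  loopless := ⟨fun a h => G.loopless.irrefl a h.1⟩

/-- The vertices covered by the family `P`. -/
def coveredSet (P : ι → List V) : Set V :=
  {v | ∃ i, v ∈ P i}

theorem crossEdges_mono {P' : ι → List V} (h : ∀ i, P' i ⊆ P i) :
    crossEdges G P' ⊆ crossEdges G P := by
  rintro e ⟨he, i, j, hij, a, ha, b, hb, rfl⟩
  exact ⟨he, i, j, hij, a, h i ha, b, h j hb, rfl⟩

theorem linkageGraph_adj_of_mem (hM : IsInducedMatching G M) {a b : V} {i j : ι} (ha : a ∈ P i)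
    (hb : b ∈ P j) (hab : s(a, b) ∈ M) : (linkageGraph G P M).Adj a b :=
  ⟨hM.1 hab, i, j, ha, hb, .inr hab⟩

theorem mem_coveredSet_of_isChainBetween {l : List V}
    (h : IsChainBetween (linkageGraph G P M).Adj (X ∩ coveredSet P) Y l) :
    ∀ v ∈ l, v ∈ coveredSet P :=
  h.forall_mem Set.inter_subset_right fun _ _ ⟨_, _, j, _, hb, _⟩ => ⟨j, hb⟩

theorem IsLinkage.toLinkageGraph (hP : IsLinkage G.Adj X Y P) (M : Set (Sym2 V)) :
    IsLinkage (linkageGraph G P M).Adj (X ∩ coveredSet P) (Y ∩ coveredSet P) P :=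
  ⟨fun i => (hP.chain i).imp_of_mem (fun _ ha _ hb hab => ⟨hab, i, i, ha, hb, .inl rfl⟩)
    (Set.inter_subset_inter_right X fun _ hv => ⟨i, hv⟩)
    (Set.inter_subset_inter_right Y fun _ hv => ⟨i, hv⟩), hP.disjoint⟩

theorem IsLinkage.exists_half_linkageGraph {P : Fin (2 * N) → List V} (hP : IsLinkage G.Adj X Y P)
    (hM : IsInducedMatching G M) :
    ∃ Q : Fin N → List V, IsLinkage (linkageGraph G P M).Adj
        (X ∩ coveredSet P) (Y ∩ coveredSet P) Q ∧
      Pairwise fun i j => ∀ a ∈ Q i, ∀ b ∈ Q j, s(a, b) ∉ M := by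
  have hcov := hM.subset (M' := {e ∈ M | ∀ v ∈ e, v ∈ coveredSet P}) fun e he => he.1
  obtain ⟨Q, hQ, hne⟩ := (hP.toLinkageGraph M).exists_isLinkage_of_encard_fiber_le two_pos
    hcov.encard_fiber_le_two fun a b hab => (hcov.mk_setoid_eq_iff.1 hab).imp id
      fun h => by
        obtain ⟨i, hi⟩ := h.2 a (by simp)
        obtain ⟨j, hj⟩ := h.2 b (by simp)
        exact linkageGraph_adj_of_mem hM hi hj h.1
  have hQP : ∀ i, ∀ v ∈ Q i, v ∈ coveredSet P := fun i =>
    mem_coveredSet_of_isChainBetween (hQ.chain i)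
  refine ⟨Q, hQ, fun i j hij a ha b hb hab => hne hij a ha b hb ?_⟩
  refine hcov.mk_setoid_eq_iff.2 (.inr ⟨hab, ?_⟩)
  simpa using ⟨hQP i a ha, hQP j b hb⟩

/-- An unmatched vertex `a` of `Q s` has all its `Q s`-neighbours on its own `P i`, hence keeps all
its `P i`-neighbours. -/
theorem exists_mate_of_adj {W : Set V} (hP : IsLinkage G.Adj X Y P)
    (hPmin : ∀ i, IsMinimalChain G.Adj X Y (P i))
    (hQ : IsLinkage (linkageGraph G P M).Adj (X ∩ W) (Y ∩ W) Q)
    (hQmin : ∀ t, IsMinimalChain (linkageGraph G P M).Adj (X ∩ W) (Y ∩ W) (Q t)) {s t : κ}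
    (hst : s ≠ t) {i : ι} {a b : V} (has : a ∈ Q s) (hbt : b ∈ Q t) (hai : a ∈ P i)
    (hbi : b ∈ P i) (hab : G.Adj a b) : ∃ a', s(a, a') ∈ M := by
  by_contra! hunmatched
  have hstay : ∀ w ∈ Q s, (linkageGraph G P M).Adj a w → w ∈ P i ∧ G.Adj a w := by
    rintro w - ⟨haw, j, j', haj, hwj', hjj'⟩
    obtain rfl := hP.eq_of_mem hai haj
    obtain rfl := hjj'.resolve_right (hunmatched w)
    exact ⟨hwj', haw⟩
  exact hQ.disjoint hst ((hPmin i).mem_of_adj_of_forall_adj (hQmin s) hai has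
    Set.inter_subset_left Set.inter_subset_left hstay hbi hab) hbt

theorem crossEdges_subset_diff (hM : IsInducedMatching G M)
    (hP : IsLinkage G.Adj X Y P) (hPmin : ∀ i, IsMinimalChain G.Adj X Y (P i))
    (hQ : IsLinkage (linkageGraph G P M).Adj (X ∩ coveredSet P) (Y ∩ coveredSet P) Q)
    (hQmin : ∀ t,
      IsMinimalChain (linkageGraph G P M).Adj (X ∩ coveredSet P) (Y ∩ coveredSet P) (Q t))
    (hQM : Pairwise fun s t => ∀ a ∈ Q s, ∀ b ∈ Q t, s(a, b) ∉ M) :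
    crossEdges G Q ⊆ crossEdges G P \ M := by
  rintro _ ⟨hab, s, t, hst, a, ha, b, hb, rfl⟩
  obtain ⟨i, hai⟩ := mem_coveredSet_of_isChainBetween (hQ.chain s) a ha
  obtain ⟨j, hbj⟩ := mem_coveredSet_of_isChainBetween (hQ.chain t) b hb
  refine ⟨⟨hab, i, j, ?_, a, hai, b, hbj, rfl⟩, hQM hst a ha b hb⟩
  rintro rfl
  obtain ⟨a', ha'⟩ := exists_mate_of_adj hP hPmin hQ hQmin hst ha hb hai hbj hab
  obtain ⟨b', hb'⟩ := exists_mate_of_adj hP hPmin hQ hQmin hst.symm hb ha hbj hai hab.symm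
  exact hQM hst a ha b hb (hM.mem_of_adj ha' hb' hab)

theorem IsLinkage.exists_half {P : Fin (2 * N) → List V} (hP : IsLinkage G.Adj X Y P)
    (hM : IsInducedMatching G M) :
    ∃ Q : Fin N → List V, IsLinkage G.Adj X Y Q ∧ crossEdges G Q ⊆ crossEdges G P \ M := by
  obtain ⟨P', hP', hmin, hP'P⟩ := hP.exists_isMinimalChain
  obtain ⟨Q, hQ, hQM⟩ := hP'.exists_half_linkageGraph hM
  obtain ⟨R, hR, hRmin, hRQ⟩ := hQ.exists_isMinimalChain
  refine ⟨R, hR.mono (fun _ _ h => h.1) Set.inter_subset_left Set.inter_subset_left, ?_⟩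
  calc crossEdges G R ⊆ crossEdges G P' \ M := crossEdges_subset_diff hM hP' hmin hR hRmin
        fun s t hst a ha b hb => hQM hst a (hRQ s ha) b (hRQ t hb)
    _ ⊆ crossEdges G P \ M := Set.sdiff_subset_sdiff_left (crossEdges_mono hP'P)

theorem IsLinkage.exists_crossEdges_subset_diff {σ : Type*} {M : σ → Set (Sym2 V)}
    (hM : ∀ c, IsInducedMatching G (M c)) (s : Finset σ) {k : ℕ}
    {P : Fin (2 ^ s.card * k) → List V} (hP : IsLinkage G.Adj X Y P) :
    ∃ Q : Fin k → List V,
      IsLinkage G.Adj X Y Q ∧ crossEdges G Q ⊆ crossEdges G P \ ⋃ c ∈ s, M c := by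
  classical
  revert P
  induction s using Finset.induction_on with
  | empty =>
    rw [Finset.card_empty, pow_zero, one_mul]
    exact fun {P} hP => ⟨P, hP, by simp⟩
  | insert c s hc ih =>
    rw [Finset.card_insert_of_notMem hc, pow_succ', mul_assoc]
    intro P hP
    obtain ⟨Q, hQ, hQP⟩ := hP.exists_half (hM c)
    obtain ⟨R, hR, hRQ⟩ := ih hQ
    refine ⟨R, hR, fun e he => ?_⟩
    obtain ⟨heQ, hes⟩ := hRQ he
    obtain ⟨heP, hec⟩ := hQP heQ
    exact ⟨heP, by simpa [hec] using hes⟩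

end Halving

section StrongEdgeColoring

theorem exists_coloring_on_finset_of_encard_neighborSet_le {β : Type*} {H : SimpleGraph β} {d : ℕ}
    (hH : ∀ v, (H.neighborSet v).encard ≤ d) (s : Finset β) :
    ∃ c : β → Fin (d + 1), ∀ a ∈ s, ∀ b ∈ s, H.Adj a b → c a ≠ c b := by
  classical
  induction s using Finset.induction_on with
  | empty => exact ⟨fun _ => 0, by simp⟩
  | insert a s _ ih =>
    obtain ⟨c, hc⟩ := ih
    obtain ⟨x, hx⟩ : ∃ x, x ∉ c '' H.neighborSet a := by
      by_contra! hall
      have hcard : ((d + 1 : ℕ) : ℕ∞) ≤ d := by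
        calc ((d + 1 : ℕ) : ℕ∞) = (c '' H.neighborSet a).encard := by
              simp [Set.eq_univ_of_forall hall]
          _ ≤ d := (Set.encard_image_le _ _).trans (hH a)
      exact (Nat.lt_succ_self d).not_ge (by exact_mod_cast hcard)
    have hxc : ∀ b, H.Adj a b → c b ≠ x := fun b hab hb => hx ⟨b, hab, hb⟩
    refine ⟨Function.update c a x, fun b hb b' hb' hadj => ?_⟩
    grind [Function.update_apply, SimpleGraph.Adj.symm, SimpleGraph.irrefl]

theorem colorable_succ_of_encard_neighborSet_le {β : Type*} {H : SimpleGraph β} {d : ℕ}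
    (hH : ∀ v, (H.neighborSet v).encard ≤ d) : H.Colorable (d + 1) := by
  refine nonempty_hom_of_forall_finite_subgraph_hom fun H' hfin => ?_
  choose c hc using exists_coloring_on_finset_of_encard_neighborSet_le hH
  refine Coloring.mk (fun v => c hfin.toFinset v) fun {v w} hvw => ?_
  exact hc _ v (by simp) w (by simp) hvw.adj_sub

variable {G : SimpleGraph V} {Δ : ℕ}

/-- The square of the line graph of `G`, on all pairs of vertices: its proper colourings are the
strong edge colourings of `G`. -/
def conflictGraph (G : SimpleGraph V) : SimpleGraph (Sym2 V) where
  Adj e f := e ≠ f ∧ e ∈ G.edgeSet ∧ f ∈ G.edgeSet ∧ ∃ a ∈ e, ∃ b ∈ f, a = b ∨ G.Adj a b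
  symm := ⟨fun _ _ ⟨hne, he, hf, a, ha, b, hb, hab⟩ =>
    ⟨hne.symm, hf, he, b, hb, a, ha, hab.imp Eq.symm Adj.symm⟩⟩
  loopless := ⟨fun _ h => h.1 rfl⟩

theorem hasStrongEdgeColoring_of_colorable {n : ℕ} (h : (conflictGraph G).Colorable n) :
    HasStrongEdgeColoring G n := by
  obtain ⟨c⟩ := h
  refine ⟨fun i => {e ∈ G.edgeSet | c e = i}, fun i => ⟨fun e he => he.1, ?_⟩, ?_, ?_⟩
  · rintro e ⟨he, rfl⟩ f ⟨hf, hfe⟩ hne a ha b hb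
    refine not_or.1 fun hab => ?_
    exact c.valid ⟨hne, he, hf, a, ha, b, hb, hab⟩ hfe.symm
  · exact fun i j hij => Set.disjoint_left.2 fun e he he' => hij (he.2.symm.trans he'.2)
  · ext e
    simp

theorem exists_mem_adj_of_conflict {u v b : V} {f : Sym2 V} (hf : f ∈ G.edgeSet)
    (hne : f ≠ s(u, v)) (hb : b ∈ f) (hub : u = b ∨ G.Adj u b) :
    ∃ w ∈ f, (G.Adj u w ∧ w ≠ v) ∨ (G.Adj v w ∧ w ≠ u) := by
  obtain ⟨q, rfl⟩ := Sym2.mem_iff_exists.1 hb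
  rcases hub with rfl | hub
  · exact ⟨q, by simp, .inl ⟨hf, fun hqv => hne (hqv ▸ rfl)⟩⟩
  · by_cases hbv : b = v
    · subst hbv
      exact ⟨q, by simp, .inr ⟨hf, fun hqu => hne (hqu ▸ Sym2.eq_swap)⟩⟩
    · exact ⟨b, by simp, .inl ⟨hub, hbv⟩⟩

theorem neighborSet_conflictGraph_subset [DecidableEq V] [G.LocallyFinite] (u v : V) :
    (conflictGraph G).neighborSet s(u, v) ⊆
      ((G.neighborFinset u).erase v ∪ (G.neighborFinset v).erase u).biUnion
        fun w => (G.neighborFinset w).image fun z => s(w, z) := by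
  rintro f ⟨hne, -, hf, a, ha, b, hb, hab⟩
  obtain ⟨w, hw, hwadj⟩ : ∃ w ∈ f, (G.Adj u w ∧ w ≠ v) ∨ (G.Adj v w ∧ w ≠ u) := by
    rcases Sym2.mem_iff.1 ha with rfl | rfl
    · exact exists_mem_adj_of_conflict hf hne.symm hb hab
    · obtain ⟨w, hw, hwadj⟩ := exists_mem_adj_of_conflict hf (Sym2.eq_swap ▸ hne.symm) hb hab
      exact ⟨w, hw, hwadj.symm⟩
  obtain ⟨z, rfl⟩ := Sym2.mem_iff_exists.1 hw
  exact Finset.mem_biUnion.2 ⟨w, by simpa [and_comm] using hwadj,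
    Finset.mem_image.2 ⟨z, by simpa using hf, rfl⟩⟩

theorem card_neighborFinset_erase_le [DecidableEq V] [G.LocallyFinite] (hΔ : ∀ v, G.degree v ≤ Δ)
    {u v : V} (huv : G.Adj u v) : ((G.neighborFinset u).erase v).card ≤ Δ - 1 := by
  rw [Finset.card_erase_of_mem (by simpa using huv), card_neighborFinset_eq_degree]
  exact Nat.sub_le_sub_right (hΔ u) 1

theorem encard_neighborSet_conflictGraph_le [G.LocallyFinite] (hΔ : ∀ v, G.degree v ≤ Δ)
    (e : Sym2 V) : ((conflictGraph G).neighborSet e).encard ≤ (2 * Δ * (Δ - 1) : ℕ) := by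
  classical
  by_cases he : e ∈ G.edgeSet
  · induction e using Sym2.ind with | _ u v => ?_
    have huv : G.Adj u v := he
    have hnear : ((G.neighborFinset u).erase v ∪ (G.neighborFinset v).erase u).card ≤
        (Δ - 1) + (Δ - 1) :=
      (Finset.card_union_le _ _).trans <| add_le_add (card_neighborFinset_erase_le hΔ huv)
        (card_neighborFinset_erase_le hΔ huv.symm)
    refine (Set.encard_le_encard (neighborSet_conflictGraph_subset u v)).trans ?_
    rw [Set.encard_coe_eq_coe_finsetCard, ENat.natCast_le_natCast]
    calc _ ≤ _ * Δ := Finset.card_biUnion_le_card_mul _ _ Δ fun w _ =>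
          Finset.card_image_le.trans ((G.card_neighborFinset_eq_degree w).trans_le (hΔ w))
      _ ≤ ((Δ - 1) + (Δ - 1)) * Δ := Nat.mul_le_mul_right Δ hnear
      _ = 2 * Δ * (Δ - 1) := by ring
  · have hempty : (conflictGraph G).neighborSet e = ∅ :=
      Set.eq_empty_of_forall_notMem fun f hf => he hf.2.1
    simp [hempty]

theorem hasStrongEdgeColoring_of_degree_le [G.LocallyFinite] (hΔ : ∀ v, G.degree v ≤ Δ) :
    HasStrongEdgeColoring G (2 * Δ * (Δ - 1) + 1) :=
  hasStrongEdgeColoring_of_colorable <|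
    colorable_succ_of_encard_neighborSet_le (encard_neighborSet_conflictGraph_le hΔ)

end StrongEdgeColoring

section Paths

variable {G : SimpleGraph V} {X Y : Set V}

theorem IsChainBetween.exists_isXYPath {l : List V} (h : IsChainBetween G.Adj X Y l) :
    ∃ p : PathPkg G, IsXYPath G X Y p ∧ ∀ v ∈ pkgSupport p, v ∈ l := by
  classical
  have hne := h.ne_nil
  obtain ⟨hchain, ⟨x, hx, hxX⟩, ⟨y, hy, hyY⟩⟩ := h
  rw [List.head?_eq_some_head hne, Option.mem_some_iff] at hx
  rw [List.getLast?_eq_some_getLast hne, Option.mem_some_iff] at hy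
  subst hx hy
  refine ⟨⟨_, _, (Walk.ofSupport l hne hchain).bypass⟩, ⟨Walk.bypass_isPath _, hxX, hyY⟩,
    fun v hv => ?_⟩
  simpa only [Walk.support_ofSupport] using Walk.support_bypass_subset_support _ hv

theorem IsSeparator.xySeparates {Z : Set V} (h : IsSeparator G.Adj X Y Z) :
    XYSeparates G X Y Z := by
  rintro ⟨x, y, p⟩ ⟨-, hx, hy⟩
  obtain ⟨z, hzp, hzZ⟩ := h p.support ⟨p.isChain_adj_support,
    ⟨x, by simp [List.head?_eq_some_head p.support_ne_nil], hx⟩,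
    ⟨y, by simp [List.getLast?_eq_some_getLast p.support_ne_nil], hy⟩⟩
  exact ⟨z, hzZ, hzp⟩

theorem IsLinkage.exists_pairwise_pkgNonAdj {ι : Type*} {P : ι → List V}
    (hP : IsLinkage G.Adj X Y P) (hcross : crossEdges G P = ∅) :
    ∃ p : ι → PathPkg G,
      (∀ i, IsXYPath G X Y (p i)) ∧ Pairwise fun i j => PkgNonAdj G (p i) (p j) := by
  choose p hp hpP using fun i => (hP.chain i).exists_isXYPath
  refine ⟨p, hp, fun i j hij a ha b hb => ⟨?_, fun hab => ?_⟩⟩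
  · rintro rfl
    exact hP.disjoint hij (hpP i a ha) (hpP j a hb)
  · exact hcross.le ⟨hab, i, j, hij, a, hpP i a ha, b, hpP j b hb, rfl⟩

theorem exists_pairwise_pkgNonAdj_or_xySeparates {n : ℕ} (hG : HasStrongEdgeColoring G n)
    (X Y : Set V) (k : ℕ) :
    (∃ P : Fin k → PathPkg G,
        (∀ i, IsXYPath G X Y (P i)) ∧ Pairwise fun i j => PkgNonAdj G (P i) (P j)) ∨
      ∃ Z : Set V, Z.Finite ∧ Z.ncard < 2 ^ n * k ∧ XYSeparates G X Y Z := by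
  obtain ⟨M, hM, -, hcover⟩ := hG
  obtain ⟨P, hP⟩ | ⟨Z, hZcard, hZ⟩ :=
    exists_isLinkage_or_separator G.Adj X Y (2 ^ (Finset.univ : Finset (Fin n)).card * k)
  · left
    obtain ⟨Q, hQ, hQM⟩ := hP.exists_crossEdges_subset_diff hM
    refine hQ.exists_pairwise_pkgNonAdj <| Set.eq_empty_of_forall_notMem fun e he => (hQM he).2 ?_
    simpa [hcover] using he.1
  · exact .inr ⟨Z, Z.finite_toSet, by simpa using hZcard, hZ.xySeparates⟩

end Paths

theorem statement_3 (Δ k : ℕ) (G : SimpleGraph V)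
    (hfin : ∀ v, (G.neighborSet v).Finite)
    (hdeg : ∀ v, (G.neighborSet v).ncard ≤ Δ)
    (X Y : Set V) :
    (∃ P : Fin k → PathPkg G,
        (∀ i, IsXYPath G X Y (P i)) ∧
        Pairwise fun i j => PkgNonAdj G (P i) (P j)) ∨
    (∃ Z : Set V, Z.Finite ∧ Z.ncard < 2 ^ (2 * Δ * (Δ - 1) + 1) * k ∧
        XYSeparates G X Y Z) := by
  let _ : G.LocallyFinite := fun v => (hfin v).fintype
  have hΔ : ∀ v, G.degree v ≤ Δ := fun v =>
    (Set.ncard_eq_toFinset_card' (G.neighborSet v)).symm.trans_le (hdeg v)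
  exact exists_pairwise_pkgNonAdj_or_xySeparates (hasStrongEdgeColoring_of_degree_le hΔ) X Y k
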